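/- arXiv:2506.23335 — 2 statements merged into one kernel-verified Lean document; each statement's English description precedes it below -/
import Mathlib

section
/- For every real number x, exp(x) ≤ x + exp(9x²/16). -/
/-!
When `16 / 9 ≤ |x|` we have `|x| ≤ 9 * x ^ 2 / 16`, and `exp x ≤ x + exp |x|` always holds.
Otherwise compare Taylor polynomials: bounding `exp x` above by a sextic and `exp (9 * x ^ 2 / 16)`
below by a cubic in `9 * x ^ 2 / 16`, the terms of degree at most one cancel, and what remains is
`x ^ 2 * ((1 / 4 - x / 3) ^ 2 + x ^ 2 * q x)` for a quadratic `q` with negative discriminant.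
-/

open Finset Real
open scoped Nat

theorem abs_exp_sub_sum_range_le {x : ℝ} {n : ℕ} (hx : |x| / (n.succ : ℝ) ≤ 1 / 2) :
    |exp x - ∑ k ∈ range n, x ^ k / (k ! : ℝ)| ≤ |x| ^ n / (n ! : ℝ) * 2 := by
  have h := Complex.exp_bound' (x := (x : ℂ)) (n := n) (by rwa [Complex.norm_real])
  rw [Complex.norm_real, norm_eq_abs] at h
  exact_mod_cast h

theorem exp_le_sextic_of_abs_le {x : ℝ} (hx : |x| ≤ 7 / 2) :
    exp x ≤ 1 + x + x ^ 2 / 2 + x ^ 3 / 6 + x ^ 4 / 24 + x ^ 5 / 120 + x ^ 6 / 360 := by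
  have taylor_sum : ∑ k ∈ range 6, x ^ k / (k ! : ℝ) =
      1 + x + x ^ 2 / 2 + x ^ 3 / 6 + x ^ 4 / 24 + x ^ 5 / 120 := by
    simp [sum_range_succ, Nat.factorial]
  have remainder : |x| ^ 6 / (6 ! : ℝ) * 2 = x ^ 6 / 360 := by
    rw [Even.pow_abs (by decide), show (6 ! : ℝ) = 720 by norm_num [Nat.factorial]]
    ring
  have h := abs_exp_sub_sum_range_le (x := x) (n := 6) (by norm_num; linarith)
  rw [taylor_sum, remainder] at h
  linarith [le_of_abs_le h]

theorem cubic_le_exp_of_nonneg {y : ℝ} (hy : 0 ≤ y) :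
    1 + y + y ^ 2 / 2 + y ^ 3 / 6 ≤ exp y := by
  simpa [sum_range_succ, Nat.factorial] using sum_le_exp_of_nonneg hy 4

theorem sextic_le_add_cubic_sq (x : ℝ) :
    1 + x + x ^ 2 / 2 + x ^ 3 / 6 + x ^ 4 / 24 + x ^ 5 / 120 + x ^ 6 / 360 ≤
      x + (1 + 9 * x ^ 2 / 16 + (9 * x ^ 2 / 16) ^ 2 / 2 + (9 * x ^ 2 / 16) ^ 3 / 6) := by
  have quadratic_nonneg : 0 ≤ 25 / 4608 - x / 120 + (729 / 24576 - 1 / 360) * x ^ 2 := by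
    nlinarith [sq_nonneg (x - 1 / 6)]
  have quartic_nonneg : 0 ≤ (1 / 4 - x / 3) ^ 2 +
      x ^ 2 * (25 / 4608 - x / 120 + (729 / 24576 - 1 / 360) * x ^ 2) := by
    positivity
  linear_combination x ^ 2 * quartic_nonneg

theorem exp_le_add_exp_abs (x : ℝ) : exp x ≤ x + exp |x| := by
  rcases le_total 0 x with hx | hx
  · rw [abs_of_nonneg hx]
    exact le_add_of_nonneg_left hx
  · rw [abs_of_nonpos hx]
    linarith [exp_le_one_iff.2 hx, add_one_le_exp (-x)]

theorem exp_le_add_exp_sq (x : ℝ) : Real.exp x ≤ x + Real.exp (9 * x ^ 2 / 16) := by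
  rcases le_total |x| (16 / 9) with hx | hx
  · calc
      exp x ≤ 1 + x + x ^ 2 / 2 + x ^ 3 / 6 + x ^ 4 / 24 + x ^ 5 / 120 + x ^ 6 / 360 :=
        exp_le_sextic_of_abs_le (by linarith)
      _ ≤ x + (1 + 9 * x ^ 2 / 16 + (9 * x ^ 2 / 16) ^ 2 / 2 + (9 * x ^ 2 / 16) ^ 3 / 6) :=
        sextic_le_add_cubic_sq x
      _ ≤ x + exp (9 * x ^ 2 / 16) := by
        gcongr
        exact cubic_le_exp_of_nonneg (by positivity)
  · have abs_le_exponent : |x| ≤ 9 * x ^ 2 / 16 := by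
      rw [← sq_abs]
      nlinarith
    calc
      exp x ≤ x + exp |x| := exp_le_add_exp_abs x
      _ ≤ x + exp (9 * x ^ 2 / 16) := by gcongr
end

section
/- Let (Ω, F, P) be a probability space with a filtration {F_k}_{k∈ℕ₊}, and let {A_k}_{k∈ℕ₊} be events with A_k ∈ F_k for each k. Let β ∈ (0,1) and suppose that for every almost surely finite stopping time τ taking values in ℕ₊ with respect to the filtration {F_k}, P({ω : ω ∈ A_{τ(ω)}}) ≥ 1 − β. Then P(∩_{k∈ℕ₊} A_k) ≥ 1 − β. -/
open MeasureTheory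

/-!
Fix a horizon `N` and stop at the first time `k ≤ N` at which `A k` fails, or at `N` if there is
none. The event `A` holds at this bounded stopping time exactly when `A k` holds for every `k ≤ N`,
so the hypothesis bounds the measure of `⋂ k ≤ N, A k` from below, uniformly in `N`. Continuity from
above then gives the bound for `⋂ k, A k`.
-/

open scoped ENNReal

section FirstFailure

variable {ι Ω : Type*} [ConditionallyCompleteLinearOrderBot ι]

/-- The first time `k ≤ N` at which the event `A k` fails, and `N` if they all hold: the stopping
time at which the hypothesis is applied. It is encoded as the hitting time of `False` by the
`Prop`-valued process `k ↦ (ω ∈ A k)`. -/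
noncomputable def firstFailure (A : ι → Set Ω) (N : ι) : Ω → ι :=
  hittingBtwn (fun k ω ↦ ω ∈ A k) {False} ⊥ N

variable {A : ι → Set Ω} {N : ι}

theorem firstFailure_le (ω : Ω) : firstFailure A N ω ≤ N :=
  hittingBtwn_le ω

variable [WellFoundedLT ι]

theorem notMem_firstFailure_of_exists_notMem {ω : Ω} (hω : ∃ k ≤ N, ω ∉ A k) :
    ω ∉ A (firstFailure A N ω) := by
  obtain ⟨k, hkN, hk⟩ := hω
  have h_hit : (ω ∈ A (firstFailure A N ω)) ∈ ({False} : Set Prop) :=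
    hittingBtwn_mem_set (u := fun k ω ↦ ω ∈ A k) ⟨k, ⟨bot_le, hkN⟩, eq_false hk⟩
  exact of_eq_false h_hit

theorem setOfPred_mem_firstFailure :
    {ω | ω ∈ A (firstFailure A N ω)} = ⋂ k ≤ N, A k := by
  ext ω
  rw [Set.mem_iInter₂]
  constructor
  · intro hω
    by_contra! hfail
    exact notMem_firstFailure_of_exists_notMem hfail hω
  · exact fun hω ↦ hω _ (firstFailure_le ω)

theorem isStoppingTime_firstFailure [Countable ι] {m : MeasurableSpace Ω} {F : Filtration ι m}
    (hA : ∀ k, MeasurableSet[F k] (A k)) :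
    IsStoppingTime F (fun ω ↦ ((firstFailure A N ω : ι) : WithTop ι)) := by
  have h_adapted : Adapted F (fun k ω ↦ ω ∈ A k) :=
    fun k ↦ @MeasurableSet.mem Ω (A k) (F k) (hA k)
  exact h_adapted.isStoppingTime_hittingBtwn (MeasurableSet.singleton False)

end FirstFailure

theorem prob_iInter_of_prob_event_at_stopping_times_general
    {ι Ω : Type*} [LinearOrder ι] [WellFoundedLT ι] [Countable ι]
    {m : MeasurableSpace Ω} {μ : Measure Ω} (F : Filtration ι m) {A : ι → Set Ω}
    (hA : ∀ k, MeasurableSet[F k] (A k)) (hA_fin : ∃ k, μ (A k) ≠ ∞) {c : ℝ≥0∞}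
    (h : ∀ τ : Ω → ι, IsStoppingTime F (fun ω ↦ (τ ω : WithTop ι)) → (∃ N, ∀ ω, τ ω ≤ N) →
      c ≤ μ {ω | ω ∈ A (τ ω)}) :
    c ≤ μ (⋂ k, A k) := by
  have : Nonempty ι := hA_fin.nonempty
  let _ : OrderBot ι := WellFoundedLT.toOrderBot ι
  let _ : ConditionallyCompleteLinearOrderBot ι :=
    WellFoundedLT.conditionallyCompleteLinearOrderBot ι
  have hA_meas : ∀ k, NullMeasurableSet (A k) μ :=
    fun k ↦ (F.le k _ (hA k)).nullMeasurableSet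
  rw [measure_iInter_eq_iInf_measure_iInter_le hA_meas hA_fin]
  refine le_iInf fun N ↦ ?_
  rw [← setOfPred_mem_firstFailure]
  exact h _ (isStoppingTime_firstFailure hA) ⟨N, firstFailure_le⟩

theorem prob_iInter_of_prob_event_at_stopping_times
    {Ω : Type*} [m : MeasurableSpace Ω] (μ : Measure Ω) [IsProbabilityMeasure μ]
    (F : ℕ+ → MeasurableSpace Ω) (hF_mono : Monotone F) (hF_le : ∀ k, F k ≤ m)
    (A : ℕ+ → Set Ω) (hA : ∀ k, MeasurableSet[F k] (A k))
    (β : ℝ) (hβ : β ∈ Set.Ioo (0 : ℝ) 1)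
    (h : ∀ τ : Ω → WithTop ℕ+,
      (∀ k : ℕ+, MeasurableSet[F k] {ω | τ ω = (k : WithTop ℕ+)}) →
      μ {ω | τ ω ≠ ⊤} = 1 →
      ENNReal.ofReal (1 - β) ≤ μ {ω | ∃ k : ℕ+, τ ω = (k : WithTop ℕ+) ∧ ω ∈ A k}) :
    ENNReal.ofReal (1 - β) ≤ μ (⋂ k : ℕ+, A k) :=
  prob_iInter_of_prob_event_at_stopping_times_general ⟨F, hF_mono, hF_le⟩ hA
    ⟨1, measure_ne_top μ _⟩ fun τ hτ _ ↦ by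
      simpa using h (fun ω ↦ τ ω) hτ.measurableSet_eq_of_countable (by simp)
end
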